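/- For all i, j ∈ {0,1,…,d} with i < j, one has E_i* A_j E_j* = E_i* J E_j*; and for every i ∈ {0,1,…,d}, one has E_i* J E_i* = E_i* (A_0 + A_1 + ⋯ + A_i) E_i*. -/

import Mathlib

open Finset Matrix

/-- Vertex set of the wreath product `K_{n 0} ≀ K_{n 1} ≀ ⋯ ≀ K_{n (d-1)}`
(paper indices `n_1, …, n_d` correspond to `n 0, …, n (d-1)`). -/
abbrev Vx (d : ℕ) (n : ℕ → ℕ) : Type := (i : Fin d) → Fin (n i)

/-- `delta x y = 0` if `x = y`; otherwise `delta x y` is the largest (1-based)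
index at which `x` and `y` differ. -/
def delta {d : ℕ} {n : ℕ → ℕ} (x y : Vx d n) : ℕ :=
  (Finset.univ.filter fun i => x i ≠ y i).sup fun i => (i : ℕ) + 1

/-- The `i`-th adjacency matrix of the wreath product: `(A i) x y = 1` iff `delta x y = i`. -/
noncomputable def A (d : ℕ) (n : ℕ → ℕ) (i : ℕ) : Matrix (Vx d n) (Vx d n) ℂ :=
  Matrix.of fun x y => if delta x y = i then 1 else 0

/-- The valencies: `k 0 = 1` and, for `1 ≤ i`, `k i = n_1 ⋯ n_{i-1} (n_i - 1)`,
i.e. `k i = n 0 ⋯ n (i-2) * (n (i-1) - 1)`. -/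
def k (n : ℕ → ℕ) (i : ℕ) : ℕ :=
  if i = 0 then 1 else (∏ j ∈ Finset.range (i - 1), n j) * (n (i - 1) - 1)

/-- The dual idempotent `E_i*` with respect to the base point `x₀`: the diagonal
0-1 matrix with `(E_i*)_{yy} = 1` iff `delta x₀ y = i`. -/
noncomputable def Es {d : ℕ} {n : ℕ → ℕ} (x₀ : Vx d n) (i : ℕ) :
    Matrix (Vx d n) (Vx d n) ℂ :=
  Matrix.of fun y z => if y = z ∧ delta x₀ y = i then 1 else 0

/-- The all-ones matrix `J`. -/
noncomputable def Jm (d : ℕ) (n : ℕ → ℕ) : Matrix (Vx d n) (Vx d n) ℂ :=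
  Matrix.of fun _ _ => 1

/-- The matrices `G i j`. -/
noncomputable def G {d : ℕ} {n : ℕ → ℕ} (x₀ : Vx d n) (i j : ℕ) :
    Matrix (Vx d n) (Vx d n) ℂ :=
  if i < j then ((k n j : ℂ))⁻¹ • (Es x₀ i * A d n j * Es x₀ j)
  else if j < i then ((k n j : ℂ))⁻¹ • (Es x₀ i * A d n i * Es x₀ j)
  else ((k n i : ℂ))⁻¹ • (Es x₀ i * Jm d n * Es x₀ i)

/-- The span `U` of the matrices `G i j`, `i, j ∈ [d]`. -/
noncomputable def Uspan {d : ℕ} {n : ℕ → ℕ} (x₀ : Vx d n) :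
    Submodule ℂ (Matrix (Vx d n) (Vx d n) ℂ) :=
  Submodule.span ℂ (Set.range fun p : Fin (d + 1) × Fin (d + 1) => G x₀ p.1 p.2)

/-- The Terwilliger algebra of the wreath product with respect to `x₀`. -/
noncomputable def Ter {d : ℕ} {n : ℕ → ℕ} (x₀ : Vx d n) :
    Subalgebra ℂ (Matrix (Vx d n) (Vx d n) ℂ) :=
  Algebra.adjoin ℂ
    ((Set.range fun i : Fin (d + 1) => A d n i) ∪ (Set.range fun i : Fin (d + 1) => Es x₀ i))

/-- The matrices `F i h`, for `1 ≤ i ≤ d` and `0 ≤ h ≤ i - 1`. -/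
noncomputable def F {d : ℕ} {n : ℕ → ℕ} (x₀ : Vx d n) (i h : ℕ) :
    Matrix (Vx d n) (Vx d n) ℂ :=
  if h < i - 1 then
    (∑ j ∈ Finset.range (h + 1), (k n j : ℂ))⁻¹ •
        (∑ j ∈ Finset.range (h + 1), Es x₀ i * A d n j * Es x₀ i)
      - (∑ j ∈ Finset.range (h + 2), (k n j : ℂ))⁻¹ •
          (∑ j ∈ Finset.range (h + 2), Es x₀ i * A d n j * Es x₀ i)
  else
    (∑ j ∈ Finset.range i, (k n j : ℂ))⁻¹ •
        (∑ j ∈ Finset.range i, Es x₀ i * A d n j * Es x₀ i)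
      - G x₀ i i

/-!
The function `delta` is an ultrametric, in which all triangles are isosceles with the two longest
sides equal. Points on the spheres of radii `i < j` about `x₀` are therefore at distance exactly
`j`, while points on the sphere of radius `i` are at distance at most `i`. The products
`E_i* M E_j*` only see the entries of `M` between the two spheres.
-/

section Ultrametric

variable {d : ℕ} {n : ℕ → ℕ} {x y z : Vx d n}

theorem delta_le_iff {m : ℕ} : delta x y ≤ m ↔ ∀ i : Fin d, m ≤ i → x i = y i := by
  simp only [delta, Finset.sup_le_iff, mem_filter_univ, Nat.succ_le_iff]
  exact forall_congr' fun i => by rw [← not_le, not_imp_not]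

theorem delta_comm (x y : Vx d n) : delta x y = delta y x := by
  simp only [delta, ne_comm]

theorem delta_le_max (x y z : Vx d n) : delta x z ≤ max (delta x y) (delta y z) :=
  delta_le_iff.2 fun i hi =>
    (delta_le_iff.1 (le_max_left _ _) i hi).trans (delta_le_iff.1 (le_max_right _ _) i hi)

theorem delta_eq_of_delta_lt (h : delta x y < delta x z) : delta y z = delta x z := by
  apply le_antisymm
  · calc delta y z ≤ max (delta y x) (delta x z) := delta_le_max y x z
      _ = delta x z := by rw [delta_comm, max_eq_right h.le]
  · exact (le_max_iff.1 (delta_le_max x y z)).resolve_left h.not_ge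

end Ultrametric

section DualIdempotents

variable {d : ℕ} {n : ℕ → ℕ} (x₀ : Vx d n) {i j : ℕ}

theorem Es_eq_diagonal (i : ℕ) :
    Es x₀ i = diagonal fun y => if delta x₀ y = i then 1 else 0 := by
  ext y z
  simp only [Es, of_apply, diagonal_apply, ite_and]

theorem Es_mul_mul_Es_apply (i j : ℕ) (M : Matrix (Vx d n) (Vx d n) ℂ) (y z : Vx d n) :
    (Es x₀ i * M * Es x₀ j) y z = if delta x₀ y = i ∧ delta x₀ z = j then M y z else 0 := by
  rw [Es_eq_diagonal, Es_eq_diagonal, mul_diagonal, diagonal_mul]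
  simp only [ite_mul, one_mul, zero_mul, mul_ite, mul_one, mul_zero, ← ite_and, and_comm]

theorem Es_mul_mul_Es_congr {M N : Matrix (Vx d n) (Vx d n) ℂ}
    (h : ∀ y z, delta x₀ y = i → delta x₀ z = j → M y z = N y z) :
    Es x₀ i * M * Es x₀ j = Es x₀ i * N * Es x₀ j := by
  ext y z
  simp only [Es_mul_mul_Es_apply]
  exact ite_congr rfl (fun hyz => h y z hyz.1 hyz.2) fun _ => rfl

theorem sum_range_A_apply (m : ℕ) (y z : Vx d n) :
    (∑ l ∈ range m, A d n l) y z = if delta y z < m then 1 else 0 := by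
  simp only [Matrix.sum_apply, A, of_apply, Finset.sum_ite_eq, mem_range]

theorem Es_mul_A_mul_Es_of_lt (hij : i < j) :
    Es x₀ i * A d n j * Es x₀ j = Es x₀ i * Jm d n * Es x₀ j := by
  refine Es_mul_mul_Es_congr x₀ fun y z hy hz => ?_
  have hyz : delta y z = j := hz ▸ delta_eq_of_delta_lt (hy.trans_lt (hij.trans_eq hz.symm))
  exact if_pos hyz

theorem Es_mul_sum_range_A_mul_Es {m : ℕ} (hi : i < m) (hj : j < m) :
    Es x₀ i * (∑ l ∈ range m, A d n l) * Es x₀ j = Es x₀ i * Jm d n * Es x₀ j := by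
  refine Es_mul_mul_Es_congr x₀ fun y z hy hz => ?_
  have hyz : delta y z < m :=
    calc delta y z ≤ max (delta y x₀) (delta x₀ z) := delta_le_max y x₀ z
      _ = max i j := by rw [delta_comm, hy, hz]
      _ < m := max_lt hi hj
  rw [sum_range_A_apply, if_pos hyz, Jm, of_apply]

end DualIdempotents

/-- for `i < j ≤ d`, `E_i* A_j E_j* = E_i* J E_j*`; and for every `i ≤ d`,
`E_i* J E_i* = E_i* (A 0 + A 1 + ⋯ + A i) E_i*`. -/
theorem stmt14 (d : ℕ) (hd : 1 ≤ d) (n : ℕ → ℕ) (hn : ∀ i < d, 2 ≤ n i)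
    (x₀ : Vx d n) :
    (∀ i j : ℕ, i < j → j ≤ d →
      Es x₀ i * A d n j * Es x₀ j = Es x₀ i * Jm d n * Es x₀ j) ∧
    (∀ i : ℕ, i ≤ d →
      Es x₀ i * Jm d n * Es x₀ i
        = Es x₀ i * (∑ j ∈ Finset.range (i + 1), A d n j) * Es x₀ i) :=
  ⟨fun _ _ hij _ => Es_mul_A_mul_Es_of_lt x₀ hij,
    fun i _ => (Es_mul_sum_range_A_mul_Es x₀ i.lt_succ_self i.lt_succ_self).symm⟩
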